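/- Let (X, Σ) be a measurable space, let μ be a finite (nonnegative) measure on X, and let C be an outer measure on X. Then there exists a set A ∈ Σ with C(A) = 0 such that, setting μ_s = μ restricted to A and μ_d = μ restricted to X ∖ A, one has: μ = μ_d + μ_s, μ_s is concentrated on the C-null set A, and μ_d(E) = 0 for every E ∈ Σ with C(E) = 0. Moreover the decomposition is unique: if μ = ν_d + ν_s where ν_d and ν_s are finite measures, ν_d(E) = 0 for every E ∈ Σ with C(E) = 0, and ν_s is concentrated on some B ∈ Σ with C(B) = 0, then ν_d = μ_d and ν_s = μ_s. -/

import Mathlib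

/-!
The measurable `C`-null sets are closed under countable unions, so a countable union `A` of them
contains every other one up to a `μ`-null set; hence `μ` restricted to `Aᶜ` is diffuse.
For uniqueness, a diffuse and a singular measure are mutually singular. If `μ = νd + νs`, then
`νs` on `Aᶜ` is both singular and dominated by the diffuse measure `μ.restrict Aᶜ`, so it vanishes,
while `νd A = 0` because `C A = 0`.
-/

open MeasureTheory

section

variable {X : Type*} [MeasurableSpace X] {C : OuterMeasure X} {μ ν : Measure X}

/-- A measure is diffuse with respect to the capacity `C` if it does not charge measurable
`C`-null sets. This is the property of the part `μ_d` of the decomposition. -/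
def IsDiffuse (C : OuterMeasure X) (μ : Measure X) : Prop :=
  ∀ E : Set X, MeasurableSet E → C E = 0 → μ E = 0

/-- A measure is singular with respect to the capacity `C` if it is concentrated on a measurable
`C`-null set, where being concentrated on `B` is encoded as `μ.restrict B = μ`. This is the
property of the part `μ_s` of the decomposition. -/
def IsSingular (C : OuterMeasure X) (μ : Measure X) : Prop :=
  ∃ B : Set X, MeasurableSet B ∧ C B = 0 ∧ μ.restrict B = μ

theorem exists_mem_forall_ae_le (μ : Measure X) [SFinite μ] {S : Set (Set X)}
    (measurableSet_of_mem : ∀ s ∈ S, MeasurableSet s)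
    (sUnion_mem : ∀ D ⊆ S, D.Countable → ⋃₀ D ∈ S) :
    ∃ A ∈ S, ∀ s ∈ S, s ≤ᵐ[μ] A :=
  let ⟨D, hDS, hD, hle⟩ := Measure.exists_ae_subset_biUnion_countable μ measurableSet_of_mem
  ⟨⋃₀ D, sUnion_mem D hDS hD, hle⟩

theorem exists_null_isDiffuse_restrict_compl (C : OuterMeasure X) (μ : Measure X) [SFinite μ] :
    ∃ A : Set X, MeasurableSet A ∧ C A = 0 ∧ IsDiffuse C (μ.restrict Aᶜ) := by
  obtain ⟨A, ⟨hA, hCA⟩, hle⟩ :=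
    exists_mem_forall_ae_le μ (S := {E | MeasurableSet E ∧ C E = 0}) (fun _ hE ↦ hE.1)
      fun D hDS hD ↦ ⟨.sUnion hD fun E hE ↦ (hDS hE).1,
        (measure_sUnion_null_iff hD).2 fun E hE ↦ (hDS hE).2⟩
  refine ⟨A, hA, hCA, fun E hE hCE ↦ ?_⟩
  rw [Measure.restrict_apply hE, ← Set.sdiff_eq]
  exact ae_le_set.1 (hle E ⟨hE, hCE⟩)

theorem IsDiffuse.mutuallySingular (hμ : IsDiffuse C μ) (hν : IsSingular C ν) :
    μ.MutuallySingular ν := by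
  obtain ⟨B, hB, hCB, hνB⟩ := hν
  refine ⟨B, hB, hμ B hB hCB, ?_⟩
  rw [← hνB, Measure.restrict_apply' hB, Set.compl_inter_self, measure_empty]

theorem IsSingular.measure_eq_zero_of_isDiffuse_restrict {s : Set X} (hν : IsSingular C ν)
    (hμ : IsDiffuse C (μ.restrict s)) (hνμ : ν ≪ μ) : ν s = 0 :=
  Measure.restrict_eq_zero.1 <| Measure.eq_zero_of_absolutelyContinuous_of_mutuallySingular
    (hνμ.restrict s) ((hμ.mutuallySingular hν).symm.restrict s)

theorem restrict_add_eq_left {s : Set X} (hμ : μ sᶜ = 0) (hν : ν s = 0) :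
    (μ + ν).restrict s = μ := by
  rw [Measure.restrict_add, Measure.restrict_eq_self_of_ae_mem (mem_ae_iff.2 hμ),
    Measure.restrict_eq_zero.2 hν, add_zero]

theorem IsDiffuse.eq_restrict_of_add {A : Set X} (hμ : IsDiffuse C μ) (hν : IsSingular C ν)
    (hA : MeasurableSet A) (hCA : C A = 0) (hdiff : IsDiffuse C ((μ + ν).restrict Aᶜ)) :
    μ = (μ + ν).restrict Aᶜ ∧ ν = (μ + ν).restrict A := by
  have hμA : μ A = 0 := hμ A hA hCA
  have hνA : ν Aᶜ = 0 := hν.measure_eq_zero_of_isDiffuse_restrict hdiff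
    (Measure.le_add_left le_rfl).absolutelyContinuous
  constructor
  · exact (restrict_add_eq_left (by rwa [compl_compl]) hνA).symm
  · rw [add_comm, restrict_add_eq_left hνA hμA]

theorem measure_decomposition_diffuse_singular_general (μ : Measure X) [SFinite μ]
    (C : OuterMeasure X) :
    ∃ A : Set X, MeasurableSet A ∧ C A = 0 ∧
      μ = μ.restrict Aᶜ + μ.restrict A ∧
      (μ.restrict A).restrict A = μ.restrict A ∧
      IsDiffuse C (μ.restrict Aᶜ) ∧
      ∀ νd νs : Measure X, IsDiffuse C νd → IsSingular C νs →
        μ = νd + νs → νd = μ.restrict Aᶜ ∧ νs = μ.restrict A := by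
  obtain ⟨A, hA, hCA, hdiff⟩ := exists_null_isDiffuse_restrict_compl C μ
  refine ⟨A, hA, hCA, (Measure.restrict_compl_add_restrict hA).symm, ?_, hdiff, ?_⟩
  · rw [Measure.restrict_restrict hA, Set.inter_self]
  · rintro νd νs hd hs rfl
    exact hd.eq_restrict_of_add hs hA hCA hdiff

end

/-- Abstract decomposition of a finite measure with respect to an outer measure
("capacity") `C`: `μ` splits uniquely as the sum of a part that vanishes on all
`C`-null measurable sets and a part concentrated on a `C`-null measurable set. -/
theorem measure_decomposition_diffuse_singular
    {X : Type*} [MeasurableSpace X] (μ : Measure X) [IsFiniteMeasure μ]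
    (C : MeasureTheory.OuterMeasure X) :
    ∃ A : Set X, MeasurableSet A ∧ C A = 0 ∧
      μ = μ.restrict Aᶜ + μ.restrict A ∧
      (μ.restrict A).restrict A = μ.restrict A ∧
      (∀ E : Set X, MeasurableSet E → C E = 0 → μ.restrict Aᶜ E = 0) ∧
      (∀ νd νs : Measure X, IsFiniteMeasure νd → IsFiniteMeasure νs →
        (∀ E : Set X, MeasurableSet E → C E = 0 → νd E = 0) →
        (∃ B : Set X, MeasurableSet B ∧ C B = 0 ∧ νs.restrict B = νs) →
        μ = νd + νs → νd = μ.restrict Aᶜ ∧ νs = μ.restrict A) := by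
  obtain ⟨A, hA, hCA, hadd, hconc, hdiff, huniq⟩ :=
    measure_decomposition_diffuse_singular_general μ C
  exact ⟨A, hA, hCA, hadd, hconc, hdiff, fun νd νs _ _ ↦ huniq νd νs⟩
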